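/- arXiv:1810.03878 — 3 statements merged into one kernel-verified Lean document; each statement's English description precedes it below -/
import Mathlib

section
/- Let E_{2k} be the m×m skew-symmetric matrix consisting of k diagonal copies of E = [[0,1],[-1,0]] followed by zeros. For a skew-symmetric m×m matrix A over a field of odd characteristic, let Â be the matrix obtained by deleting row and column 2k. If A has rank 2r and Â has the same rank 2r and row 2k-1 of Â is zero, then tr(E_{2k}A) = tr(E_{2k-2}Â). -/
open Matrix
def IsSkewSym {K : Type} [Field K] {m : ℕ} (A : Matrix (Fin m) (Fin m) K) : Prop :=
  Aᵀ = -A ∧ ∀ i, A i i = 0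

def Estd (K : Type) [Field K] (k m : ℕ) : Matrix (Fin m) (Fin m) K :=
  Matrix.of fun i j =>
    if j.val = i.val + 1 ∧ i.val % 2 = 0 ∧ j.val < 2*k then 1
    else if i.val = j.val + 1 ∧ j.val % 2 = 0 ∧ i.val < 2*k then -1 else 0

noncomputable def na (K : Type) [Field K] (r m : ℕ) : ℕ :=
  Nat.card {A : Matrix (Fin m) (Fin m) K // IsSkewSym A ∧ A.rank = r}

noncomputable def Na (K : Type) [Field K] (r m : ℕ) : ℕ :=
  Nat.card {A : Matrix (Fin m) (Fin m) K // IsSkewSym A ∧ A.rank ≤ r}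

noncomputable def wSmall (K : Type) [Field K] (k r m : ℕ) : ℕ :=
  Nat.card {A : Matrix (Fin m) (Fin m) K //
    IsSkewSym A ∧ A.rank = 2*r ∧ Matrix.trace (Estd K k m * A) ≠ 0}

noncomputable def Wcap (K : Type) [Field K] (k t m : ℕ) : ℕ :=
  Nat.card {A : Matrix (Fin m) (Fin m) K //
    IsSkewSym A ∧ A.rank ≤ 2*t ∧ Matrix.trace (Estd K k m * A) ≠ 0}

noncomputable def projWt (K : Type) [Field K] (m t : ℕ)
    (φ : Matrix (Fin m) (Fin m) K →ₗ[K] K) : ℕ :=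
  Nat.card {x : Projectivization K (Matrix (Fin m) (Fin m) K) //
    ∃ (A : Matrix (Fin m) (Fin m) K) (h : A ≠ 0),
      x = Projectivization.mk K A h ∧ IsSkewSym A ∧ A.rank ≤ 2*t ∧ φ A ≠ 0}

def delIdx (m i : ℕ) (j : Fin (m-1)) : Fin m :=
  if j.val < i then ⟨j.val, by have := j.isLt; omega⟩
  else ⟨j.val + 1, by have := j.isLt; omega⟩

/-!
The trace `tr (E_{2k} A)` is the sum over `l < k` of the differences of the two mirror entries of
`A` in rows and columns `2l` and `2l + 1` (counted from `0`). Deleting row and column `2k - 1`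
removes the last difference and keeps the others. Equality of ranks puts the deleted column,
shortened, in the column space of `Â`; a zero row of `Â` kills that space at the corresponding
coordinate, and so kills the entry of the deleted column. The transposed argument kills the mirror
entry, and the lost difference is zero.
-/

section Rank

variable {m n p q K : Type*} [Field K] [Fintype n] [Fintype q]

theorem span_range_col_submatrix_eq_of_rank_eq {A : Matrix m n K} {f : p → m} {g : q → n}
    (h : (A.submatrix f g).rank = A.rank) :
    Submodule.span K (Set.range (A.submatrix f g).col) =
      Submodule.span K (Set.range (A.submatrix f id).col) := by
  have := FiniteDimensional.span_of_finite K (Set.finite_range (A.submatrix f id).col)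
  refine Submodule.eq_of_le_of_finrank_le (Submodule.span_mono ?_) ?_
  · rintro _ ⟨j, rfl⟩
    exact ⟨g j, rfl⟩
  · rw [← rank_eq_finrank_span_cols, ← rank_eq_finrank_span_cols, h]
    exact A.rank_submatrix_le f id

theorem row_eq_zero_of_rank_submatrix_eq {A : Matrix m n K} {f : p → m} {g : q → n}
    (h : (A.submatrix f g).rank = A.rank) {i : p} (hi : ∀ j, A.submatrix f g i j = 0) (j : n) :
    A (f i) j = 0 := by
  have hker : Submodule.span K (Set.range (A.submatrix f g).col) ≤
      LinearMap.ker (LinearMap.proj i : (p → K) →ₗ[K] K) := by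
    rw [Submodule.span_le]
    rintro _ ⟨j, rfl⟩
    exact hi j
  rw [span_range_col_submatrix_eq_of_rank_eq h] at hker
  exact hker (Submodule.subset_span ⟨j, rfl⟩)

theorem col_eq_zero_of_rank_submatrix_eq [Finite m] [Finite p] {A : Matrix m n K} {f : p → m}
    {g : q → n} (h : (A.submatrix f g).rank = A.rank) {j : q}
    (hj : ∀ i, A.submatrix f g i j = 0) (i : m) : A i (g j) = 0 := by
  cases nonempty_fintype m
  cases nonempty_fintype p
  have hT : (Aᵀ.submatrix g f).rank = Aᵀ.rank := by
    rw [← transpose_submatrix, rank_transpose, rank_transpose, h]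
  exact row_eq_zero_of_rank_submatrix_eq hT hj i

end Rank

theorem delIdx_of_lt {m i : ℕ} {j : Fin (m - 1)} (h : j.val < i) :
    delIdx m i j = ⟨j, by omega⟩ :=
  if_pos h

section Trace

variable {K : Type} [Field K]

theorem Estd_zero (m : ℕ) : Estd K 0 m = 0 := by
  ext i j
  simp [Estd]

theorem Estd_succ {k m : ℕ} (h : 2 * k + 1 < m) :
    Estd K (k + 1) m = Estd K k m +
      (single ⟨2 * k, by omega⟩ ⟨2 * k + 1, h⟩ 1 - single ⟨2 * k + 1, h⟩ ⟨2 * k, by omega⟩ 1) := by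
  ext i j
  simp only [Estd, of_apply, Matrix.add_apply, Matrix.sub_apply, single_apply, Fin.ext_iff]
  split_ifs <;> first | omega | simp

theorem trace_Estd_succ_mul {k m : ℕ} (h : 2 * k + 1 < m) (A : Matrix (Fin m) (Fin m) K) :
    trace (Estd K (k + 1) m * A) = trace (Estd K k m * A) +
      (A ⟨2 * k + 1, h⟩ ⟨2 * k, by omega⟩ - A ⟨2 * k, by omega⟩ ⟨2 * k + 1, h⟩) := by
  simp only [Estd_succ h, add_mul, sub_mul, trace_add, trace_sub, trace_single_mul, one_smul]

theorem trace_Estd_mul_submatrix_delIdx {k m i : ℕ} (hi : 2 * k ≤ i) (hm : 2 * k ≤ m - 1)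
    (A : Matrix (Fin m) (Fin m) K) :
    trace (Estd K k (m - 1) * A.submatrix (delIdx m i) (delIdx m i)) =
      trace (Estd K k m * A) := by
  induction k with
  | zero => simp only [Estd_zero, zero_mul, trace_zero]
  | succ k ih =>
    have hlow : delIdx m i ⟨2 * k, by omega⟩ = ⟨2 * k, by omega⟩ :=
      delIdx_of_lt (show 2 * k < i by omega)
    have hhigh : delIdx m i ⟨2 * k + 1, by omega⟩ = ⟨2 * k + 1, by omega⟩ :=
      delIdx_of_lt (show 2 * k + 1 < i by omega)
    rw [trace_Estd_succ_mul (by omega), trace_Estd_succ_mul (by omega),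
      ih (by omega) (by omega), submatrix_apply, submatrix_apply, hlow, hhigh]

end Trace

theorem stmt12_general {K : Type} [Field K] {m k : ℕ} (hk : 1 ≤ k) (hkm : 2 * k ≤ m)
    {A : Matrix (Fin m) (Fin m) K}
    (hrank : (A.submatrix (delIdx m (2 * k - 1)) (delIdx m (2 * k - 1))).rank = A.rank)
    (hrow : ∀ j, A.submatrix (delIdx m (2 * k - 1)) (delIdx m (2 * k - 1))
      ⟨2 * k - 2, by omega⟩ j = 0)
    (hcol : ∀ i, A.submatrix (delIdx m (2 * k - 1)) (delIdx m (2 * k - 1))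
      i ⟨2 * k - 2, by omega⟩ = 0) :
    trace (Estd K k m * A) =
      trace (Estd K (k - 1) (m - 1) *
        A.submatrix (delIdx m (2 * k - 1)) (delIdx m (2 * k - 1))) := by
  obtain ⟨l, rfl⟩ := Nat.exists_eq_add_of_le' hk
  have hidx : delIdx m (2 * (l + 1) - 1) ⟨2 * (l + 1) - 2, by omega⟩ = ⟨2 * l, by omega⟩ :=
    delIdx_of_lt (show 2 * (l + 1) - 2 < 2 * (l + 1) - 1 by omega)
  have hupper := row_eq_zero_of_rank_submatrix_eq hrank hrow ⟨2 * l + 1, by omega⟩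
  have hlower := col_eq_zero_of_rank_submatrix_eq hrank hcol ⟨2 * l + 1, by omega⟩
  rw [hidx] at hupper hlower
  rw [trace_Estd_succ_mul (by omega), hupper, hlower, sub_zero, add_zero, Nat.add_sub_cancel,
    trace_Estd_mul_submatrix_delIdx (by omega) (by omega)]

theorem stmt12 (K : Type) [Field K] (hchar : ringChar K ≠ 2) (m k r : ℕ)
    (hm : 2 ≤ m) (hk : 1 ≤ k) (hkm : 2*k ≤ m)
    (A : Matrix (Fin m) (Fin m) K) (hA : IsSkewSym A) (hr : A.rank = 2*r)
    (hhat : (A.submatrix (delIdx m (2*k-1)) (delIdx m (2*k-1))).rank = 2*r)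
    (hrow : ∀ j, A.submatrix (delIdx m (2*k-1)) (delIdx m (2*k-1)) ⟨2*k-2, by omega⟩ j = 0) :
    Matrix.trace (Estd K k m * A)
      = Matrix.trace (Estd K (k-1) (m-1) *
          A.submatrix (delIdx m (2*k-1)) (delIdx m (2*k-1))) :=
  stmt12_general hk hkm (hhat.trans hr.symm) hrow fun i =>
    (congrFun₂ hA.1 _ _).trans (neg_eq_zero.mpr (hrow i))
end

section
/- Let q be odd and 0 < 2t ≤ m. Then W_2(2t,m) = (q-1)(q^{m-2t} - 1) q^{m+2t-4} n_a(2t-2, m-2) + (q-1) q^{m-2} N_a(2t-2, m-1), where W_2(2t,m) is the number of m×m skew-symmetric matrices A over F_q of rank at most 2t with tr(E_2 A) ≠ 0, i.e., with A_{21} ≠ 0. -/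
open Matrix
/- The leading `2 × 2` block of an alternating matrix with `A₁₂ ≠ 0` is invertible, so such a matrix
amounts to that block, an arbitrary upper right block and an alternating Schur complement, whose
rank is smaller by two. Hence `W₂(2t, m) = (q - 1) q ^ (2(m - 2)) N_a(2t - 2, m - 2)`.

Bordering an alternating matrix `D` of size `n` by a row `v` keeps its rank if `v` lies in the
column space of `D` and raises it by two otherwise. Ranks of alternating matrices being even,
`N_a(2s, n + 1) = q ^ n N_a(2s - 2, n) + q ^ (2s) n_a(2s, n)`; for `n = m - 2`, `s = t - 1` this
rewrites `q ^ (m - 2) N_a(2t - 2, m - 2)` in terms of `N_a(2t - 2, m - 1)`. -/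

section Rank

variable {K m n m' n' : Type*} [Field K] [Fintype n]

theorem finrank_range_prodMap {V₁ V₂ W₁ W₂ : Type*}
    [AddCommGroup V₁] [Module K V₁] [AddCommGroup V₂] [Module K V₂]
    [AddCommGroup W₁] [Module K W₁] [AddCommGroup W₂] [Module K W₂]
    [FiniteDimensional K W₁] [FiniteDimensional K W₂] (f : V₁ →ₗ[K] W₁) (g : V₂ →ₗ[K] W₂) :
    Module.finrank K (f.prodMap g).range =
      Module.finrank K f.range + Module.finrank K g.range := by
  have h : (f.prodMap g).range = (f.range.subtype.prodMap g.range.subtype).range := by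
    simp only [LinearMap.range_prodMap, Submodule.range_subtype]
  rw [h, LinearMap.finrank_range_of_inj, Module.finrank_prod]
  exact f.range.injective_subtype.prodMap g.range.injective_subtype

theorem rank_fromBlocks_zero_zero [Finite m] [Finite m'] [Fintype n'] (A : Matrix m n K)
    (D : Matrix m' n' K) : (fromBlocks A 0 0 D).rank = A.rank + D.rank := by
  let e := LinearEquiv.sumArrowLequivProdArrow m m' K K
  let e' := LinearEquiv.sumArrowLequivProdArrow n n' K K
  have h : (fromBlocks A 0 0 D).mulVecLin =
      e.symm.toLinearMap ∘ₗ A.mulVecLin.prodMap D.mulVecLin ∘ₗ e'.toLinearMap := by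
    refine LinearMap.ext fun x => e.injective ?_
    ext i <;> simp [e, e', fromBlocks_mulVec] <;> rfl
  rw [rank, rank, rank, ← finrank_range_prodMap, h, LinearMap.range_comp, LinearMap.range_comp,
    LinearEquiv.range, Submodule.map_top]
  exact e.symm.finrank_map_eq _

theorem rank_fromBlocks_of_isUnit [Fintype m] [DecidableEq m] {A : Matrix m m K} (hA : IsUnit A)
    (B : Matrix m n K) (C : Matrix n m K) (D : Matrix n n K) :
    (fromBlocks A B C D).rank = Fintype.card m + (D - C * A⁻¹ * B).rank := by
  classical
  let := hA.invertible
  rw [fromBlocks_eq_of_invertible₁₁, rank_mul_eq_left_of_isUnit_det,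
    rank_mul_eq_right_of_isUnit_det, rank_fromBlocks_zero_zero, rank_of_isUnit _ hA,
    invOf_eq_nonsing_inv]
  all_goals simp

theorem range_mulVecLin_fromCols_replicateCol (v : m → K) (D : Matrix m n K) :
    (fromCols (replicateCol Unit v) D).mulVecLin.range =
      D.mulVecLin.range ⊔ Submodule.span K {v} := by
  have h : Set.range (fromCols (replicateCol Unit v) D).col = {v} ∪ Set.range D.col := by
    rw [← Sum.elim_comp_inl_inr (fromCols (replicateCol Unit v) D).col, Set.Sum.elim_range]
    exact congrArg (· ∪ Set.range D.col) (Set.range_unique)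
  rw [range_mulVecLin, range_mulVecLin, h, Submodule.span_union, sup_comm]

theorem rank_fromCols_replicateCol_of_mem {v : m → K} {D : Matrix m n K}
    (h : v ∈ D.mulVecLin.range) : (fromCols (replicateCol Unit v) D).rank = D.rank := by
  rw [rank, range_mulVecLin_fromCols_replicateCol, sup_of_le_left, rank]
  rwa [Submodule.span_singleton_le_iff_mem]

theorem rank_fromCols_replicateCol_of_notMem [Finite m] {v : m → K} {D : Matrix m n K}
    (h : v ∉ D.mulVecLin.range) : (fromCols (replicateCol Unit v) D).rank = D.rank + 1 := by
  rw [rank, range_mulVecLin_fromCols_replicateCol, Submodule.finrank_sup_span_singleton h, rank]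

theorem rank_fromRows_replicateRow_of_mem [Fintype m] {w : n → K} {D : Matrix m n K}
    (h : w ∈ Dᵀ.mulVecLin.range) : (fromRows (replicateRow Unit w) D).rank = D.rank := by
  rw [← rank_transpose, transpose_fromRows, transpose_replicateRow,
    rank_fromCols_replicateCol_of_mem h, rank_transpose]

theorem rank_fromRows_replicateRow_of_notMem [Fintype m] {w : n → K} {D : Matrix m n K}
    (h : w ∉ Dᵀ.mulVecLin.range) : (fromRows (replicateRow Unit w) D).rank = D.rank + 1 := by
  rw [← rank_transpose, transpose_fromRows, transpose_replicateRow,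
    rank_fromCols_replicateCol_of_notMem h, rank_transpose]

end Rank

section Alternating

variable {R ι κ : Type*} [CommRing R]

/-- Matrices of alternating bilinear forms: the notion `IsSkewSym` for an arbitrary index type and
coefficient ring. -/
def IsAlternating (A : Matrix ι ι R) : Prop :=
  Aᵀ = -A ∧ ∀ i, A i i = 0

/-- The matrix `D` bordered by a first row `(0, v)` and a first column `(0, -v)`; it is
alternating if `D` is. -/
def skewBorder (v : ι → R) (D : Matrix ι ι R) : Matrix (Unit ⊕ ι) (Unit ⊕ ι) R :=
  fromBlocks 0 (replicateRow Unit v) (-(replicateRow Unit v)ᵀ) D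

theorem skewBorder_eq_fromRows (v : ι → R) (D : Matrix ι ι R) :
    skewBorder v D = fromRows (replicateRow Unit (Sum.elim 0 v))
      (fromCols (replicateCol Unit (-v)) D) := by
  ext (i | i) (j | j) <;> simp [skewBorder]

namespace IsAlternating

theorem apply_swap {A : Matrix ι ι R} (hA : IsAlternating A) (i j : ι) : A j i = -A i j :=
  congrFun₂ hA.1 i j

protected theorem submatrix {A : Matrix ι ι R} (hA : IsAlternating A) (f : κ → ι) :
    IsAlternating (A.submatrix f f) :=
  ⟨by rw [transpose_submatrix, hA.1, submatrix_neg]; rfl, fun i => hA.2 (f i)⟩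

protected theorem add {A B : Matrix ι ι R} (hA : IsAlternating A) (hB : IsAlternating B) :
    IsAlternating (A + B) :=
  ⟨by rw [transpose_add, hA.1, hB.1, neg_add], fun i => by simp [hA.2 i, hB.2 i]⟩

protected theorem neg {A : Matrix ι ι R} (hA : IsAlternating A) : IsAlternating (-A) :=
  ⟨by rw [transpose_neg, hA.1], fun i => by simp [hA.2 i]⟩

protected theorem sub {A B : Matrix ι ι R} (hA : IsAlternating A) (hB : IsAlternating B) :
    IsAlternating (A - B) :=
  sub_eq_add_neg A B ▸ hA.add hB.neg

protected theorem fromBlocks {A : Matrix κ κ R} {D : Matrix ι ι R} (hA : IsAlternating A)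
    (B : Matrix κ ι R) (hD : IsAlternating D) :
    IsAlternating (fromBlocks A B (-Bᵀ) D) :=
  ⟨by simp [fromBlocks_transpose, fromBlocks_neg, hA.1, hD.1], Sum.rec hA.2 hD.2⟩

theorem toBlocks₂₁_eq {A : Matrix (κ ⊕ ι) (κ ⊕ ι) R} (hA : IsAlternating A) :
    A.toBlocks₂₁ = -A.toBlocks₁₂ᵀ := by
  ext i j
  exact hA.apply_swap (.inl j) (.inr i)

theorem dotProduct_mulVec_self [Fintype ι] {A : Matrix ι ι R} (hA : IsAlternating A)
    (u : ι → R) : u ⬝ᵥ A *ᵥ u = 0 := by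
  simp only [dotProduct, mulVec, Finset.mul_sum, ← Fintype.sum_prod_type']
  refine Finset.sum_involution (fun p _ => p.swap) ?_ ?_ (by simp) (by simp)
  · rintro ⟨i, j⟩ -
    simp only [Prod.fst_swap, Prod.snd_swap, hA.apply_swap i j]
    ring
  · rintro ⟨i, j⟩ - h heq
    obtain rfl : j = i := congrArg Prod.fst heq
    simp [hA.2] at h

theorem transpose_mul_mul [Fintype κ] {A : Matrix κ κ R} (hA : IsAlternating A)
    (P : Matrix κ ι R) : IsAlternating (Pᵀ * A * P) := by
  refine ⟨by simp [Matrix.mul_assoc, hA.1], fun i => ?_⟩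
  rw [Matrix.mul_assoc]
  exact hA.dotProduct_mulVec_self (P.col i)

protected theorem inv [Fintype ι] [DecidableEq ι] {A : Matrix ι ι R} (hA : IsAlternating A)
    (hu : IsUnit A) : IsAlternating A⁻¹ := by
  have hdet : IsUnit A.det := (isUnit_iff_isUnit_det A).mp hu
  have h : A⁻¹ = -((A⁻¹)ᵀ * A * A⁻¹) := by
    rw [Matrix.mul_assoc, mul_nonsing_inv A hdet, Matrix.mul_one, transpose_nonsing_inv, hA.1]
    refine inv_eq_right_inv ?_
    rw [mul_neg, ← neg_mul, mul_nonsing_inv]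
    rwa [← hA.1, det_transpose]
  rw [h]
  exact (hA.transpose_mul_mul A⁻¹).neg

theorem isUnit_fin_two_iff {A : Matrix (Fin 2) (Fin 2) R} (hA : IsAlternating A) :
    IsUnit A ↔ IsUnit (A 0 1) := by
  simp [isUnit_iff_isUnit_det, det_fin_two, hA.2, hA.apply_swap 0 1]

protected theorem skewBorder {D : Matrix ι ι R} (hD : IsAlternating D) (v : ι → R) :
    IsAlternating (skewBorder v D) :=
  .fromBlocks ⟨by simp, by simp⟩ _ hD

end IsAlternating

section Border

variable {K ι : Type*} [Field K] [Fintype ι] {v : ι → K} {D : Matrix ι ι K}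

namespace IsAlternating

theorem mem_range_transpose_fromCols_iff (hD : IsAlternating D) :
    Sum.elim (0 : Unit → K) v ∈ (fromCols (replicateCol Unit (-v)) D)ᵀ.mulVecLin.range ↔
      v ∈ D.mulVecLin.range := by
  have h (u : ι → K) : (fromCols (replicateCol Unit (-v)) D)ᵀ *ᵥ u =
      Sum.elim (fun _ : Unit => -(v ⬝ᵥ u)) (D *ᵥ -u) := by
    rw [transpose_fromCols, fromRows_mulVec, hD.1, neg_mulVec, mulVec_neg]
    congr 1
    ext
    simp [mulVec, replicateCol, dotProduct]
  simp only [LinearMap.mem_range, mulVecLin_apply, h, Sum.elim_eq_iff]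
  constructor
  · rintro ⟨u, -, hu⟩
    exact ⟨-u, hu⟩
  · rintro ⟨u, rfl⟩
    refine ⟨-u, ?_, by rw [neg_neg]⟩
    ext
    simp [dotProduct_comm, hD.dotProduct_mulVec_self]

theorem rank_skewBorder_of_mem (hD : IsAlternating D) (h : v ∈ D.mulVecLin.range) :
    (skewBorder v D).rank = D.rank := by
  rw [skewBorder_eq_fromRows,
    rank_fromRows_replicateRow_of_mem (hD.mem_range_transpose_fromCols_iff.mpr h),
    rank_fromCols_replicateCol_of_mem (neg_mem h)]

theorem rank_skewBorder_of_notMem (hD : IsAlternating D) (h : v ∉ D.mulVecLin.range) :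
    (skewBorder v D).rank = D.rank + 2 := by
  rw [skewBorder_eq_fromRows,
    rank_fromRows_replicateRow_of_notMem (hD.mem_range_transpose_fromCols_iff.not.mpr h),
    rank_fromCols_replicateCol_of_notMem (neg_mem_iff.not.mpr h)]

end IsAlternating

end Border

/-- The type of alternating matrices, bundled so that its subsets of given rank can be counted. -/
abbrev AltMatrix (ι R : Type*) [CommRing R] : Type _ :=
  {A : Matrix ι ι R // IsAlternating A}

namespace AltMatrix

/-- Relabelling the rows and columns of an alternating matrix simultaneously. -/
def reindex (e : ι ≃ κ) : AltMatrix ι R ≃ AltMatrix κ R where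
  toFun A := ⟨A.1.submatrix e.symm e.symm, A.2.submatrix _⟩
  invFun A := ⟨A.1.submatrix e e, A.2.submatrix _⟩
  left_inv A := Subtype.ext (by simp)
  right_inv A := Subtype.ext (by simp)

/-- An alternating matrix on `Unit ⊕ ι` is the border of its lower right block by its first row. -/
def borderEquiv : AltMatrix ι R × (ι → R) ≃ AltMatrix (Unit ⊕ ι) R where
  toFun p := ⟨skewBorder p.2 p.1.1, p.1.2.skewBorder p.2⟩
  invFun A := (⟨A.1.toBlocks₂₂, A.2.submatrix Sum.inr⟩, fun i => A.1 (.inl ()) (.inr i))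
  left_inv _ := rfl
  right_inv A := by
    have h₀ : (0 : Matrix Unit Unit R) = A.1.toBlocks₁₁ := by
      ext
      exact (A.2.2 _).symm
    refine Subtype.ext ?_
    rw [← A.1.fromBlocks_toBlocks, A.2.toBlocks₂₁_eq, ← h₀]
    rfl

theorem rank_reindex [Fintype ι] [Fintype κ] (e : ι ≃ κ) (A : AltMatrix ι R) :
    (reindex e A).1.rank = A.1.rank :=
  A.1.rank_submatrix _ _

theorem even_rank {K : Type*} [Field K] [Fintype ι] (A : AltMatrix ι K) : Even A.1.rank := by
  suffices h : ∀ n (A : AltMatrix (Fin n) K), Even A.1.rank by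
    rw [← rank_reindex (Fintype.equivFin ι)]
    exact h _ _
  intro n A
  induction n with
  | zero => simp [Nat.le_zero.mp A.1.rank_le_width]
  | succ n ih =>
    let e : Unit ⊕ Fin n ≃ Fin (n + 1) := Fintype.equivOfCardEq (by simp [add_comm])
    obtain ⟨⟨D, v⟩, rfl⟩ := (borderEquiv.trans (reindex e)).surjective A
    rw [Equiv.trans_apply, rank_reindex]
    change Even (skewBorder v D.1).rank
    by_cases hv : v ∈ D.1.mulVecLin.range
    · rw [D.2.rank_skewBorder_of_mem hv]
      exact ih D
    · rw [D.2.rank_skewBorder_of_notMem hv]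
      exact (ih D).add even_two

section Schur

variable [Fintype κ] [DecidableEq κ]

/-- Schur complementation: an alternating matrix with invertible upper left block `B` and upper
right block `C` corresponds to the Schur complement `S` of `B` together with `C` and `B`. -/
noncomputable def schurEquiv : AltMatrix ι R × Matrix κ ι R × {B : AltMatrix κ R // IsUnit B.1} ≃
    {A : AltMatrix (κ ⊕ ι) R // IsUnit A.1.toBlocks₁₁} where
  toFun := fun (S, C, B) =>
    ⟨⟨fromBlocks B.1.1 C (-Cᵀ) (S.1 - Cᵀ * B.1.1⁻¹ * C),
      B.1.2.fromBlocks C (S.2.sub ((B.1.2.inv B.2).transpose_mul_mul C))⟩, B.2⟩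
  invFun A :=
    (⟨A.1.1.toBlocks₂₂ + A.1.1.toBlocks₁₂ᵀ * A.1.1.toBlocks₁₁⁻¹ * A.1.1.toBlocks₁₂,
      (A.1.2.submatrix Sum.inr).add (((A.1.2.submatrix Sum.inl).inv A.2).transpose_mul_mul _)⟩,
     A.1.1.toBlocks₁₂, ⟨⟨A.1.1.toBlocks₁₁, A.1.2.submatrix Sum.inl⟩, A.2⟩)
  left_inv := fun (S, C, B) => by simp
  right_inv A := by
    ext : 2
    simp [← A.1.2.toBlocks₂₁_eq, fromBlocks_toBlocks]

theorem rank_schurEquiv {K : Type*} [Field K] [Fintype ι]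
    (p : AltMatrix ι K × Matrix κ ι K × {B : AltMatrix κ K // IsUnit B.1}) :
    (schurEquiv p).1.1.rank = Fintype.card κ + p.1.1.rank := by
  simp [schurEquiv, rank_fromBlocks_of_isUnit p.2.2.2, Matrix.neg_mul]

theorem natCard_isUnit_toBlocks₁₁_rank_le {K : Type*} [Field K] [Fintype ι] (s : ℕ) :
    Nat.card {A : AltMatrix (κ ⊕ ι) K //
        IsUnit A.1.toBlocks₁₁ ∧ A.1.rank ≤ Fintype.card κ + s} =
      Nat.card {S : AltMatrix ι K // S.1.rank ≤ s} *
        (Nat.card K ^ (Fintype.card κ * Fintype.card ι) *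
          Nat.card {B : AltMatrix κ K // IsUnit B.1}) := by
  have hC : Nat.card (Matrix κ ι K) = Nat.card K ^ (Fintype.card κ * Fintype.card ι) := by
    rw [Matrix, Nat.card_fun, Nat.card_fun, ← pow_mul, mul_comm]
    simp only [Nat.card_eq_fintype_card]
  rw [← hC, ← Nat.card_prod, ← Nat.card_prod]
  refine Nat.card_congr ((Equiv.subtypeSubtypeEquivSubtypeInter _ _).symm.trans ?_)
  refine (schurEquiv.subtypeEquiv fun p => ?_).symm.trans Equiv.prodSubtypeFstEquivSubtypeProd
  rw [rank_schurEquiv, Nat.add_le_add_iff_left]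

end Schur

theorem natCard_isUnit_fin_two :
    Nat.card {B : AltMatrix (Fin 2) R // IsUnit B.1} = Nat.card Rˣ := by
  let e : AltMatrix (Fin 2) R ≃ R :=
    { toFun B := B.1 0 1
      invFun a := ⟨!![0, a; -a, 0], by ext i j; fin_cases i <;> fin_cases j <;> simp,
        by simp [Fin.forall_fin_two]⟩
      left_inv B := by
        ext i j
        fin_cases i <;> fin_cases j <;> simp [B.2.2, B.2.apply_swap 0 1]
      right_inv a := rfl }
  have he (B : AltMatrix (Fin 2) R) : IsUnit B.1 ↔ IsUnit (e B) := B.2.isUnit_fin_two_iff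
  exact Nat.card_congr
    ((e.subtypeEquiv he).trans Submonoid.unitsTypeEquivIsUnitSubmonoid.toEquiv.symm)

section Count

variable {K : Type*} [Field K] [Fintype ι] {s : ℕ}

theorem rank_skewBorder_le_iff (D : AltMatrix ι K) (v : ι → K) (hs : Even s) :
    (skewBorder v D.1).rank ≤ s ↔ D.1.rank < s ∨ D.1.rank = s ∧ v ∈ D.1.mulVecLin.range := by
  obtain ⟨k, hk⟩ := D.even_rank
  obtain ⟨l, rfl⟩ := hs
  by_cases h : v ∈ D.1.mulVecLin.range
  · rw [D.2.rank_skewBorder_of_mem h]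
    simp only [h, and_true]
    omega
  · rw [D.2.rank_skewBorder_of_notMem h]
    simp only [h, and_false, or_false]
    omega

theorem natCard_rank_skewBorder_le (D : AltMatrix ι K) (hs : Even s) :
    Nat.card {v : ι → K // (skewBorder v D.1).rank ≤ s} =
      (if D.1.rank < s then Nat.card K ^ Fintype.card ι else 0) +
        if D.1.rank = s then Nat.card K ^ s else 0 := by
  simp only [D.rank_skewBorder_le_iff _ hs]
  rcases lt_trichotomy D.1.rank s with h | h | h
  · simp [h, h.ne, Nat.card_fun]
  · subst h
    simpa [rank] using Module.natCard_eq_pow_finrank (K := K) (V := D.1.mulVecLin.range)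
  · simp [h.not_gt, h.ne']

theorem natCard_unit_sum_rank_le [Finite K] (hs : Even s) :
    Nat.card {A : AltMatrix (Unit ⊕ ι) K // A.1.rank ≤ s} =
      Nat.card K ^ Fintype.card ι * Nat.card {D : AltMatrix ι K // D.1.rank < s} +
        Nat.card K ^ s * Nat.card {D : AltMatrix ι K // D.1.rank = s} := by
  classical
  have := Fintype.ofFinite (AltMatrix ι K)
  have hborder (p : AltMatrix ι K × (ι → K)) :
      (skewBorder p.2 p.1.1).rank ≤ s ↔ (borderEquiv p).1.rank ≤ s := Iff.rfl
  have hsigma : Nat.card {A : AltMatrix (Unit ⊕ ι) K // A.1.rank ≤ s} =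
      ∑ D : AltMatrix ι K, Nat.card {v : ι → K // (skewBorder v D.1).rank ≤ s} :=
    (Nat.card_congr ((borderEquiv.subtypeEquiv hborder).symm.trans
      (Equiv.subtypeProdEquivSigmaSubtype fun (D : AltMatrix ι K) (v : ι → K) =>
        (skewBorder v D.1).rank ≤ s))).trans Nat.card_sigma
  have hcount (p : AltMatrix ι K → Prop) [DecidablePred p] (c : ℕ) :
      (∑ D, if p D then c else 0) = c * Nat.card {D // p D} := by
    rw [← Finset.sum_filter, Finset.sum_const, smul_eq_mul, mul_comm, Nat.card_eq_fintype_card,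
      Fintype.card_subtype]
  simp only [hsigma, natCard_rank_skewBorder_le _ hs, Finset.sum_add_distrib, hcount]

end Count

end AltMatrix

end Alternating

section Fin

variable {K : Type} [Field K] {n s : ℕ}

theorem na_eq_natCard (s n : ℕ) :
    na K s n = Nat.card {A : AltMatrix (Fin n) K // A.1.rank = s} :=
  Nat.card_congr (Equiv.subtypeSubtypeEquivSubtypeInter _ _).symm

theorem Na_eq_natCard {ι : Type*} [Fintype ι] (e : ι ≃ Fin n) (s : ℕ) :
    Na K s n = Nat.card {A : AltMatrix ι K // A.1.rank ≤ s} := by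
  have h (A : AltMatrix ι K) : A.1.rank ≤ s ↔ (AltMatrix.reindex e A).1.rank ≤ s := by
    rw [AltMatrix.rank_reindex]
  exact Nat.card_congr ((Equiv.subtypeSubtypeEquivSubtypeInter _ _).symm.trans
    ((AltMatrix.reindex e).subtypeEquiv h).symm)

theorem trace_Estd_one_mul {A : Matrix (Fin (2 + n)) (Fin (2 + n)) K} (hA : IsAlternating A) :
    trace (Estd K 1 (2 + n) * A) = -2 * A (Fin.castAdd n 0) (Fin.castAdd n 1) := by
  have hE : Estd K 1 (2 + n) = single (Fin.castAdd n 0) (Fin.castAdd n 1) 1 -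
      single (Fin.castAdd n 1) (Fin.castAdd n 0) 1 := by
    ext i j
    simp only [Estd, of_apply, Matrix.sub_apply, single_apply, Fin.ext_iff, Fin.val_castAdd,
      Fin.val_zero, Fin.val_one]
    split_ifs <;> first | omega | simp
  rw [hE, Matrix.sub_mul, trace_sub, trace_single_mul, trace_single_mul, one_smul, one_smul,
    hA.apply_swap (Fin.castAdd n 0)]
  ring

theorem Wcap_one_succ (h2 : (2 : K) ≠ 0) (n s : ℕ) :
    Wcap K 1 (s + 1) (2 + n) = Na K (2 * s) n * (Nat.card K ^ (2 * n) * (Nat.card K - 1)) := by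
  let e : AltMatrix (Fin 2 ⊕ Fin n) K ≃ AltMatrix (Fin (2 + n)) K :=
    AltMatrix.reindex finSumFinEquiv
  have hunit (A : AltMatrix (Fin 2 ⊕ Fin n) K) :
      IsUnit A.1.toBlocks₁₁ ↔ trace (Estd K 1 (2 + n) * (e A).1) ≠ 0 := by
    refine (A.2.submatrix Sum.inl).isUnit_fin_two_iff.trans ?_
    rw [isUnit_iff_ne_zero, trace_Estd_one_mul (e A).2]
    simp [e, AltMatrix.reindex, h2]
  have hrank (A : AltMatrix (Fin 2 ⊕ Fin n) K) :
      A.1.rank ≤ 2 + 2 * s ↔ (e A).1.rank ≤ 2 * (s + 1) := by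
    rw [AltMatrix.rank_reindex, mul_add_one, add_comm]
  have hcard := AltMatrix.natCard_isUnit_toBlocks₁₁_rank_le (K := K) (κ := Fin 2)
    (ι := Fin n) (2 * s)
  rw [AltMatrix.natCard_isUnit_fin_two, Nat.card_units, Fintype.card_fin, Fintype.card_fin,
    ← Na_eq_natCard (Equiv.refl _)] at hcard
  rw [← hcard]
  refine (Nat.card_congr ((e.subtypeEquiv fun A => ?_).trans
    (Equiv.subtypeSubtypeEquivSubtypeInter _ _))).symm
  rw [hunit, hrank, and_comm]

theorem Na_succ [Finite K] (n : ℕ) (hs : Even s) :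
    Na K s (n + 1) =
      Nat.card K ^ n * Nat.card {D : AltMatrix (Fin n) K // D.1.rank < s} +
        Nat.card K ^ s * na K s n := by
  let e : Unit ⊕ Fin n ≃ Fin (n + 1) := Fintype.equivOfCardEq (by simp [add_comm])
  rw [Na_eq_natCard e, AltMatrix.natCard_unit_sum_rank_le hs, na_eq_natCard, Fintype.card_fin]

theorem Na_eq_add_na [Finite K] (s n : ℕ) :
    Na K s n = Nat.card {D : AltMatrix (Fin n) K // D.1.rank < s} + na K s n := by
  classical
  have := Fintype.ofFinite K
  rw [Na_eq_natCard (Equiv.refl _), na_eq_natCard]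
  simp only [Nat.card_eq_fintype_card, le_iff_lt_or_eq]
  refine Fintype.card_subtype_or_disjoint _ _ (Pi.disjoint_iff.mpr fun D => ?_)
  exact Prop.disjoint_iff.mpr fun h => h.1.ne h.2

theorem card_pow_mul_Na [Finite K] (hs : Even s) (hsn : s ≤ n) :
    Nat.card K ^ n * Na K s n =
      (Nat.card K ^ (n - s) - 1) * Nat.card K ^ s * na K s n + Na K s (n + 1) := by
  obtain ⟨d, rfl⟩ := Nat.exists_eq_add_of_le hsn
  obtain ⟨c, hc⟩ : ∃ c, Nat.card K ^ d = c + 1 :=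
    ⟨_, (Nat.sub_add_cancel (Nat.one_le_pow _ _ Nat.card_pos)).symm⟩
  rw [Na_succ _ hs, Na_eq_add_na, pow_add, Nat.add_sub_cancel_left, hc, Nat.add_sub_cancel]
  ring

end Fin

theorem stmt16 (K : Type) [Field K] [Fintype K] (hchar : ringChar K ≠ 2)
    (m t : ℕ) (ht : 0 < t) (htm : 2*t ≤ m) :
    Wcap K 1 t m =
      (Fintype.card K - 1) * (Fintype.card K ^ (m - 2*t) - 1)
          * Fintype.card K ^ (m + 2*t - 4) * na K (2*t-2) (m-2)
        + (Fintype.card K - 1) * Fintype.card K ^ (m-2) * Na K (2*t-2) (m-1) := by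
  rw [← Nat.card_eq_fintype_card]
  obtain ⟨s, rfl⟩ : ∃ s, t = s + 1 := Nat.exists_eq_add_one.mpr ht
  obtain ⟨n, rfl⟩ : ∃ n, m = 2 + n := Nat.exists_eq_add_of_le (by omega)
  have hexp : 2 + n + 2 * (s + 1) - 4 = n + 2 * s := by omega
  have hexp' : 2 + n - 2 * (s + 1) = n - 2 * s := by omega
  have hrec := card_pow_mul_Na (K := K) (even_two_mul s) (show 2 * s ≤ n by omega)
  rw [Wcap_one_succ (Ring.two_ne_zero hchar) n s, hexp, hexp',
    show 2 * (s + 1) - 2 = 2 * s by omega, show 2 + n - 2 = n by omega,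
    show 2 + n - 1 = n + 1 by omega]
  linear_combination (Nat.card K - 1) * Nat.card K ^ n * hrec
end

section
/- Let q be odd. The minimum distance of the skew determinantal code C_A(2t,m) equals (q^{m-2t} - 1) q^{m+2t-4} n_a(2t-2, m-2) + q^{m-2} N_a(2t-2, m-1). -/
open Matrix
/-!
Delete the first row and column of a skew-symmetric matrix: what remains is a skew-symmetric
matrix `A`, bordered by a vector `u`. The rank of the bordered matrix is `A.rank` if `u` lies in
the range of `A` and `A.rank + 2` otherwise.

By a congruence every functional that is nonzero on skew-symmetric matrices becomes
`φ (border A u) = φ (border A 0) + b ⬝ᵥ u` with `b ≠ 0`. For fixed `A` the admissible `u` are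
all vectors, those in the range of `A`, or none, according to the rank of `A`. The affine function
`φ` is nonzero on a fraction `(q - 1) / q` of them, unless `b` is orthogonal to them all. On the
range of `A` this orthogonality means `A b = 0`, and then `φ` is constant. Summing over `A`, the
weight is the claimed minimum plus a nonnegative excess, coming from the `A` of maximal rank with
`A b = 0` and `φ (border A 0) ≠ 0`. The excess vanishes when `φ` is a matrix entry.

The number of `A` of given rank with `A b ≠ 0` does not depend on `b`. It is found by comparing
the recursion from bordering with a double count of the pairs `(A, b)` such that `A b = 0`.
-/

open Module

section Border

variable {R : Type*} [CommRing R] {n : ℕ}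

/-- The bordering of `A` by a first column `u` and the first row `-u`, with corner `0`; it is
skew-symmetric when `A` is. -/
def border (A : Matrix (Fin n) (Fin n) R) (u : Fin n → R) :
    Matrix (Fin (n + 1)) (Fin (n + 1)) R :=
  Matrix.of (vecCons (vecCons 0 (-u)) fun i => vecCons (u i) (A i))

theorem border_mulVec_cons (A : Matrix (Fin n) (Fin n) R) (u : Fin n → R) (c : R)
    (v : Fin n → R) :
    border A u *ᵥ vecCons c v = vecCons (-(u ⬝ᵥ v)) (c • u + A *ᵥ v) := by
  ext i
  cases i using Fin.cases <;> simp [border, mulVec, mul_comm]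

theorem border_eq_add (A : Matrix (Fin n) (Fin n) R) (u : Fin n → R) :
    border A u = border A 0 + border 0 u := by
  ext i j
  cases i using Fin.cases <;> cases j using Fin.cases <;> simp [border]

/-- The alternating matrix `x yᵀ - y xᵀ` of the bivector `x ∧ y`. -/
def wedge (x y : Fin n → R) : Matrix (Fin n) (Fin n) R :=
  vecMulVec x y - vecMulVec y x

theorem wedge_vecCons_one_zero (x : Fin (n + 1) → R) :
    wedge x (vecCons 1 0) = border 0 (vecTail x) := by
  ext i j
  cases i using Fin.cases <;> cases j using Fin.cases <;>
    simp [border, wedge, vecTail, vecMulVec_apply, -vecMulVec_cons, -cons_vecMulVec]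

end Border

section SkewSym

variable {K : Type} [Field K] {n : ℕ} {A : Matrix (Fin n) (Fin n) K}

namespace IsSkewSym

theorem apply_swap (hA : IsSkewSym A) (i j : Fin n) : A j i = -A i j :=
  congrFun (congrFun hA.1 i) j

theorem zero : IsSkewSym (0 : Matrix (Fin n) (Fin n) K) :=
  ⟨by simp, fun _ => rfl⟩

theorem smul (hA : IsSkewSym A) (c : K) : IsSkewSym (c • A) :=
  ⟨by rw [transpose_smul, hA.1, smul_neg], fun i => by simp [hA.2]⟩

theorem dotProduct_mulVec_comm (hA : IsSkewSym A) (x y : Fin n → K) :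
    x ⬝ᵥ A *ᵥ y = -(y ⬝ᵥ A *ᵥ x) := by
  rw [dotProduct_mulVec, ← mulVec_transpose, hA.1, neg_mulVec, neg_dotProduct, dotProduct_comm]

theorem exists_eq_sub_transpose (hA : IsSkewSym A) :
    ∃ L : Matrix (Fin n) (Fin n) K, A = L - Lᵀ := by
  refine ⟨Matrix.of fun i j => if j < i then A i j else 0, ?_⟩
  ext i j
  rcases lt_trichotomy i j with h | rfl | h
  · simp [h, h.not_gt, hA.apply_swap i j]
  · simp [hA.2]
  · simp [h, h.not_gt]

theorem dotProduct_mulVec_self (hA : IsSkewSym A) (x : Fin n → K) : x ⬝ᵥ A *ᵥ x = 0 := by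
  obtain ⟨L, rfl⟩ := hA.exists_eq_sub_transpose
  rw [sub_mulVec, dotProduct_sub, mulVec_transpose, dotProduct_mulVec, dotProduct_comm, sub_self]

theorem transpose_mul_mul (hA : IsSkewSym A) (P : Matrix (Fin n) (Fin n) K) :
    IsSkewSym (Pᵀ * A * P) := by
  refine ⟨?_, fun i => ?_⟩
  · simp only [transpose_mul, hA.1, transpose_transpose, Matrix.neg_mul, Matrix.mul_neg,
      Matrix.mul_assoc]
  · have h := hA.dotProduct_mulVec_self fun k => P k i
    rwa [dotProduct_mulVec] at h

end IsSkewSym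

theorem isSkewSym_border (hA : IsSkewSym A) (u : Fin n → K) : IsSkewSym (border A u) := by
  refine ⟨?_, fun i => ?_⟩
  · ext i j
    cases i using Fin.cases <;> cases j using Fin.cases <;>
      simp [border, ← hA.apply_swap]
  · cases i using Fin.cases <;> simp [border, hA.2]

/-- The skew-symmetric matrices of size `n` over `K`. -/
abbrev SkewMatrix (K : Type) [Field K] (n : ℕ) : Type :=
  {A : Matrix (Fin n) (Fin n) K // IsSkewSym A}

/-- Bordering as a bijection: a skew-symmetric matrix is determined by its first column and by
the submatrix that omits the first row and the first column. -/
def borderEquiv (K : Type) [Field K] (n : ℕ) :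
    SkewMatrix K n × (Fin n → K) ≃ SkewMatrix K (n + 1) where
  toFun p := ⟨border p.1.1 p.2, isSkewSym_border p.1.2 p.2⟩
  invFun A := (⟨A.1.submatrix Fin.succ Fin.succ, by
    rw [IsSkewSym, transpose_submatrix, A.2.1]; exact ⟨rfl, fun i => A.2.2 i.succ⟩⟩,
    fun i => A.1 i.succ 0)
  left_inv _ := rfl
  right_inv A := by
    ext i j
    cases i using Fin.cases <;> cases j using Fin.cases <;>
      simp [border, A.2.2, A.2.apply_swap 0]

theorem range_border_mulVec (hA : IsSkewSym A) (x : Fin n → K) :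
    LinearMap.range (border A (A *ᵥ x)).mulVecLin =
      (LinearMap.range A.mulVecLin).map ((dotProductEquiv K (Fin n) x).vecCons .id) := by
  have key (c : K) (v : Fin n → K) : border A (A *ᵥ x) *ᵥ vecCons c v =
      (dotProductEquiv K (Fin n) x).vecCons .id (A *ᵥ (c • x + v)) := by
    rw [border_mulVec_cons, LinearMap.vecCons_apply, dotProductEquiv_apply_apply,
      LinearMap.id_apply, mulVec_add, mulVec_smul, dotProduct_add, dotProduct_smul,
      hA.dotProduct_mulVec_self, smul_zero, zero_add, hA.dotProduct_mulVec_comm x v,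
      dotProduct_comm v]
  refine le_antisymm ?_ ?_
  · rintro _ ⟨w, rfl⟩
    obtain ⟨c, v, rfl⟩ : ∃ c v, w = vecCons c v := ⟨_, _, (cons_head_tail w).symm⟩
    exact ⟨_, LinearMap.mem_range_self _ _, (key c v).symm⟩
  · rintro _ ⟨_, ⟨v, rfl⟩, rfl⟩
    exact ⟨vecCons 0 v, by simp [key]⟩

theorem exists_mulVec_eq_zero_dotProduct_ne_zero (hA : IsSkewSym A) {u : Fin n → K}
    (hu : u ∉ LinearMap.range A.mulVecLin) : ∃ x, A *ᵥ x = 0 ∧ u ⬝ᵥ x ≠ 0 := by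
  obtain ⟨f, hfu, hf⟩ := Submodule.exists_le_ker_of_notMem hu
  obtain ⟨x, rfl⟩ := (dotProductEquiv K (Fin n)).surjective f
  refine ⟨x, dotProduct_eq_zero _ fun y => ?_, by simpa [dotProduct_comm] using hfu⟩
  have h : x ⬝ᵥ A *ᵥ y = 0 := hf (LinearMap.mem_range_self _ y)
  rw [dotProduct_comm, hA.dotProduct_mulVec_comm, h, neg_zero]

theorem range_border_of_notMem (hA : IsSkewSym A) {u : Fin n → K}
    (hu : u ∉ LinearMap.range A.mulVecLin) :
    LinearMap.range (border A u).mulVecLin =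
      (LinearMap.range A.mulVecLin ⊔ K ∙ u).map (LinearMap.vecCons 0 .id) ⊔
        K ∙ (vecCons 1 0 : Fin (n + 1) → K) := by
  obtain ⟨x, hAx, hux⟩ := exists_mulVec_eq_zero_dotProduct_ne_zero hA hu
  have hcorner : vecCons 1 0 ∈ LinearMap.range (border A u).mulVecLin :=
    ⟨vecCons 0 (-(u ⬝ᵥ x)⁻¹ • x), by
      simp [border_mulVec_cons, mulVec_neg, mulVec_smul, hAx, hux]⟩
  have hsplit (c : K) (v : Fin n → K) : border A u *ᵥ vecCons c v =
      LinearMap.vecCons (0 : (Fin n → K) →ₗ[K] K) .id (A *ᵥ v + c • u) +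
        -(u ⬝ᵥ v) • vecCons 1 0 := by
    simp [border_mulVec_cons, LinearMap.vecCons_apply, add_comm]
  refine le_antisymm ?_ (sup_le ?_ ((Submodule.span_singleton_le_iff_mem _ _).2 hcorner))
  · rintro _ ⟨w, rfl⟩
    obtain ⟨c, v, rfl⟩ : ∃ c v, w = vecCons c v := ⟨_, _, (cons_head_tail w).symm⟩
    rw [mulVecLin_apply, hsplit]
    exact Submodule.add_mem_sup
      (Submodule.mem_map_of_mem (Submodule.add_mem_sup (LinearMap.mem_range_self _ v)
        (Submodule.smul_mem _ c (Submodule.mem_span_singleton_self u))))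
      (Submodule.smul_mem _ _ (Submodule.mem_span_singleton_self _))
  · rintro _ ⟨y, hy, rfl⟩
    obtain ⟨_, ⟨v, rfl⟩, _, hcu, rfl⟩ := Submodule.mem_sup.1 hy
    obtain ⟨c, rfl⟩ := Submodule.mem_span_singleton.1 hcu
    rw [mulVecLin_apply, eq_sub_of_add_eq (hsplit c v).symm]
    exact Submodule.sub_mem _ (LinearMap.mem_range_self _ _) (Submodule.smul_mem _ _ hcorner)

open Classical in
theorem IsSkewSym.rank_border (hA : IsSkewSym A) (u : Fin n → K) :
    (border A u).rank =
      if u ∈ LinearMap.range A.mulVecLin then A.rank else A.rank + 2 := by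
  split_ifs with hu
  · obtain ⟨x, rfl⟩ := hu
    have hinj : Function.Injective ((dotProductEquiv K (Fin n) x).vecCons .id) :=
      fun y z h => congrArg vecTail h
    rw [Matrix.rank, mulVecLin_apply, range_border_mulVec hA x,
      ← (Submodule.equivMapOfInjective _ hinj _).finrank_eq]
    rfl
  · have hinj : Function.Injective (LinearMap.vecCons (0 : (Fin n → K) →ₗ[K] K) .id) :=
      fun y z h => congrArg vecTail h
    have hcorner : (vecCons 1 0 : Fin (n + 1) → K) ∉
        (LinearMap.range A.mulVecLin ⊔ K ∙ u).map (LinearMap.vecCons 0 .id) := by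
      rintro ⟨y, -, hy⟩
      exact zero_ne_one (congrFun hy 0)
    rw [Matrix.rank, range_border_of_notMem hA hu, Submodule.finrank_sup_span_singleton hcorner,
      ← (Submodule.equivMapOfInjective _ hinj _).finrank_eq,
      Submodule.finrank_sup_span_singleton hu, Matrix.rank]

theorem IsSkewSym.even_rank (hA : IsSkewSym A) : Even A.rank := by
  induction n with
  | zero => simp [Subsingleton.elim A 0]
  | succ n ih =>
    obtain ⟨⟨⟨B, hB⟩, u⟩, hp⟩ := (borderEquiv K n).surjective ⟨A, hA⟩
    obtain rfl : border B u = A := congrArg Subtype.val hp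
    rw [hB.rank_border u]
    split_ifs
    · exact ih hB
    · exact (ih hB).add even_two

end SkewSym

section Congruence

theorem exists_linearEquiv_apply_eq {K V : Type*} [Field K] [AddCommGroup V] [Module K V]
    [FiniteDimensional K V] {x y : V} (hx : x ≠ 0) (hy : y ≠ 0) : ∃ g : V ≃ₗ[K] V, g x = y := by
  obtain ⟨g, hg⟩ := Submodule.exists_linearEquiv_restrict_eq
    ((LinearEquiv.toSpanNonzeroSingleton K _ x hx).symm.trans
      (LinearEquiv.toSpanNonzeroSingleton K _ y hy))
  refine ⟨g, ?_⟩
  have hx1 : (⟨x, Submodule.mem_span_singleton_self x⟩ : K ∙ x) =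
      LinearEquiv.toSpanNonzeroSingleton K V x hx 1 := by simp
  rw [← hg ⟨x, Submodule.mem_span_singleton_self x⟩, LinearEquiv.trans_apply, hx1,
    LinearEquiv.symm_apply_apply, LinearEquiv.toSpanNonzeroSingleton_one]

variable {K : Type} [Field K] {n : ℕ}

theorem exists_GL_mulVec_eq {x y : Fin n → K} (hx : x ≠ 0) (hy : y ≠ 0) :
    ∃ P : GL (Fin n) K, P.1 *ᵥ x = y := by
  obtain ⟨g, hg⟩ := exists_linearEquiv_apply_eq (K := K) hx hy
  obtain ⟨P, hP⟩ := GeneralLinearGroup.toLin.surjective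
    (LinearMap.GeneralLinearGroup.ofLinearEquiv g)
  refine ⟨P, ?_⟩
  rw [← mulVecLin_apply, ← GeneralLinearGroup.coe_toLin, hP, ← hg]
  rfl

theorem vecCons_one_zero_ne_zero : (vecCons 1 0 : Fin (n + 1) → K) ≠ 0 :=
  fun h => one_ne_zero (congrFun h 0)

theorem transpose_mul_mul_mul {R : Type*} [CommRing R] (P Q A : Matrix (Fin n) (Fin n) R) :
    Qᵀ * (Pᵀ * A * P) * Q = (P * Q)ᵀ * A * (P * Q) := by
  simp only [transpose_mul, Matrix.mul_assoc]

/-- The congruence action `A ↦ Pᵀ A P` of an invertible matrix. -/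
def congruence (P : GL (Fin n) K) : Matrix (Fin n) (Fin n) K ≃ₗ[K] Matrix (Fin n) (Fin n) K where
  toFun A := P.1ᵀ * A * P.1
  invFun A := P⁻¹.1ᵀ * A * P⁻¹.1
  map_add' A B := by rw [Matrix.mul_add, Matrix.add_mul]
  map_smul' c A := by rw [Matrix.mul_smul, Matrix.smul_mul, RingHom.id_apply]
  left_inv A := by
    simp only [transpose_mul_mul_mul, P.mul_inv, transpose_one, Matrix.one_mul, Matrix.mul_one]
  right_inv A := by
    simp only [transpose_mul_mul_mul, P.inv_mul, transpose_one, Matrix.one_mul, Matrix.mul_one]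

theorem congruence_apply (P : GL (Fin n) K) (A : Matrix (Fin n) (Fin n) K) :
    congruence P A = P.1ᵀ * A * P.1 := rfl

theorem isSkewSym_congruence_iff (P : GL (Fin n) K) {A : Matrix (Fin n) (Fin n) K} :
    IsSkewSym (congruence P A) ↔ IsSkewSym A := by
  refine ⟨fun h => ?_, fun h => h.transpose_mul_mul P.1⟩
  rw [← (congruence P).symm_apply_apply A]
  exact h.transpose_mul_mul P⁻¹.1

theorem rank_congruence (P : GL (Fin n) K) (A : Matrix (Fin n) (Fin n) K) :
    (congruence P A).rank = A.rank := by
  have hP : IsUnit P.1.det := P.isUnit.map detMonoidHom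
  rw [congruence_apply, rank_mul_eq_left_of_isUnit_det _ _ hP,
    rank_mul_eq_right_of_isUnit_det _ _ (by rwa [det_transpose])]

theorem congruence_mulVec_eq_zero_iff (P : GL (Fin n) K) {A : Matrix (Fin n) (Fin n) K}
    {x : Fin n → K} : congruence P A *ᵥ x = 0 ↔ A *ᵥ (P.1 *ᵥ x) = 0 := by
  have hP : Function.Injective (P.1ᵀ *ᵥ ·) :=
    mulVec_injective_of_isUnit ((isUnit_transpose _).2 P.isUnit)
  rw [congruence_apply, ← mulVec_mulVec, ← mulVec_mulVec]
  exact hP.eq_iff' (mulVec_zero _)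

theorem congruence_wedge (P : GL (Fin n) K) (x y : Fin n → K) :
    congruence P (wedge x y) = wedge (P.1ᵀ *ᵥ x) (P.1ᵀ *ᵥ y) := by
  simp only [congruence_apply, wedge, Matrix.mul_sub, Matrix.sub_mul, mul_vecMulVec,
    vecMulVec_mul, mulVec_transpose]

theorem IsSkewSym.exists_apply_wedge_single_ne_zero {A : Matrix (Fin n) (Fin n) K}
    (hA : IsSkewSym A) {φ : Matrix (Fin n) (Fin n) K →ₗ[K] K} (hφ : φ A ≠ 0) :
    ∃ i j, φ (wedge (Pi.single i 1) (Pi.single j 1)) ≠ 0 := by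
  obtain ⟨L, rfl⟩ := hA.exists_eq_sub_transpose
  contrapose! hφ
  have h : φ ∘ₗ (LinearMap.id - (transposeLinearEquiv (Fin n) (Fin n) K K).toLinearMap) = 0 := by
    refine Matrix.ext_linearMap _ fun i j => LinearMap.ext_ring ?_
    simpa [wedge, single_eq_single_vecMulVec_single] using hφ i j
  exact LinearMap.congr_fun h L

end Congruence

section Counting

variable {K : Type} [Field K] {n : ℕ}

local notation "q" => Nat.card K

/-- The number of skew-symmetric matrices with the property `P`. -/
noncomputable def skewCount (P : Matrix (Fin n) (Fin n) K → Prop) : ℕ :=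
  Nat.card {A : Matrix (Fin n) (Fin n) K // IsSkewSym A ∧ P A}

theorem na_eq_skewCount (r n : ℕ) :
    na K r n = skewCount fun A : Matrix (Fin n) (Fin n) K => A.rank = r :=
  rfl

theorem Na_eq_skewCount (r n : ℕ) :
    Na K r n = skewCount fun A : Matrix (Fin n) (Fin n) K => A.rank ≤ r :=
  rfl

theorem na_eq_zero {r n : ℕ} (h : n < r) : na K r n = 0 := by
  have : IsEmpty {A : Matrix (Fin n) (Fin n) K // IsSkewSym A ∧ A.rank = r} :=
    ⟨fun A => (A.2.2 ▸ A.1.rank_le_width).not_gt h⟩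
  exact Nat.card_of_isEmpty

theorem skewCount_comp_congruence (P : GL (Fin n) K) (Q : Matrix (Fin n) (Fin n) K → Prop) :
    skewCount (fun A => Q (congruence P A)) = skewCount Q :=
  Nat.card_congr <| (congruence P).toEquiv.subtypeEquiv fun _ =>
    and_congr_left' (isSkewSym_congruence_iff P).symm

theorem skewCount_eq_card (P : Matrix (Fin n) (Fin n) K → Prop) :
    skewCount P = Nat.card {A : SkewMatrix K n // P A.1} :=
  (Nat.card_congr (Equiv.subtypeSubtypeEquivSubtypeInter _ _)).symm

theorem card_mem_range_mulVec (A : Matrix (Fin n) (Fin n) K) :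
    Nat.card {u // u ∈ LinearMap.range A.mulVecLin} = q ^ A.rank :=
  natCard_eq_pow_finrank

theorem card_pow_rank_mul_card_mulVec_eq_zero (A : Matrix (Fin n) (Fin n) K) :
    q ^ A.rank * Nat.card {v // A *ᵥ v = 0} = q ^ n := by
  have hker : Nat.card {v // A *ᵥ v = 0} = q ^ finrank K (LinearMap.ker A.mulVecLin) := by
    simp_rw [← mulVecLin_apply, ← LinearMap.mem_ker]
    exact natCard_eq_pow_finrank
  rw [hker, ← pow_add, Matrix.rank, LinearMap.finrank_range_add_finrank_ker, finrank_fin_fun]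

variable [Finite K]

noncomputable instance : Fintype (SkewMatrix K n) :=
  Fintype.ofFinite _

theorem skewCount_succ (P : Matrix (Fin (n + 1)) (Fin (n + 1)) K → Prop) :
    skewCount P = ∑ A : SkewMatrix K n, Nat.card {u : Fin n → K // P (border A.1 u)} := by
  rw [skewCount_eq_card, ← Nat.card_sigma]
  have e := (borderEquiv K n).subtypeEquivOfSubtype (p := fun A => P A.1)
  exact Nat.card_congr <| e.symm.trans <|
    Equiv.subtypeProdEquivSigmaSubtype fun (A : SkewMatrix K n) u => P (border A.1 u)

theorem skewCount_mul (P : Matrix (Fin n) (Fin n) K → Prop) [DecidablePred P] (c : ℕ) :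
    skewCount P * c = ∑ A : SkewMatrix K n, if P A.1 then c else 0 := by
  rw [← Finset.sum_filter, Finset.sum_const, smul_eq_mul, skewCount_eq_card,
    Nat.card_eq_fintype_card, Fintype.card_subtype]

theorem sum_skewCount {ι : Type*} [Fintype ι] (P : ι → Matrix (Fin n) (Fin n) K → Prop) :
    ∑ i, skewCount (P i) = ∑ A : SkewMatrix K n, Nat.card {i // P i A.1} := by
  classical
  simp_rw [skewCount_eq_card, Nat.card_eq_fintype_card, Fintype.card_subtype, Finset.card_filter]
  exact Finset.sum_comm

theorem card_add_card_not {α : Type*} [Finite α] (P : α → Prop) :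
    Nat.card {a // P a} + Nat.card {a // ¬P a} = Nat.card α := by
  classical
  rw [← Nat.card_sum, Nat.card_congr (Equiv.sumCompl P)]

theorem skewCount_and_add_and_not (P Q : Matrix (Fin n) (Fin n) K → Prop) :
    skewCount (fun A => P A ∧ Q A) + skewCount (fun A => P A ∧ ¬Q A) = skewCount P := by
  simp_rw [skewCount_eq_card, ← card_add_card_not fun A : {A : SkewMatrix K n // P A.1} => Q A.1.1]
  congr 1 <;> exact Nat.card_congr (Equiv.subtypeSubtypeEquivSubtypeInter _ _).symm

theorem skewCount_rank_eq_and_mulVec_eq_zero (r : ℕ) {b : Fin (n + 1) → K} (hb : b ≠ 0) :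
    skewCount (fun A => A.rank = r ∧ A *ᵥ b = 0) = na K r n := by
  classical
  obtain ⟨P, rfl⟩ := exists_GL_mulVec_eq vecCons_one_zero_ne_zero hb
  have hfibre (A : SkewMatrix K n) (u : Fin n → K) :
      ((border A.1 u).rank = r ∧ border A.1 u *ᵥ vecCons 1 0 = 0) ↔ (A.1.rank = r ∧ u = 0) := by
    have hu : border A.1 u *ᵥ vecCons 1 0 = 0 ↔ u = 0 := by simp [border_mulVec_cons]
    rw [hu, and_congr_left_iff]
    rintro rfl
    rw [A.2.rank_border, if_pos (Submodule.zero_mem _)]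
  calc skewCount (fun A => A.rank = r ∧ A *ᵥ (P.1 *ᵥ vecCons 1 0) = 0)
      = skewCount (fun A => A.rank = r ∧ A *ᵥ (vecCons 1 0 : Fin (n + 1) → K) = 0) := by
        rw [← skewCount_comp_congruence P fun A => A.rank = r ∧ A *ᵥ vecCons 1 0 = 0]
        simp only [rank_congruence, congruence_mulVec_eq_zero_iff]
    _ = skewCount (fun A : Matrix (Fin n) (Fin n) K => A.rank = r) * 1 := by
        rw [skewCount_succ, skewCount_mul]
        refine Finset.sum_congr rfl fun A _ => ?_
        simp only [hfibre]
        split_ifs with h <;> simp [h]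
    _ = na K r n := mul_one _

theorem IsSkewSym.card_rank_border_eq {A : Matrix (Fin n) (Fin n) K} (hA : IsSkewSym A) (r : ℕ) :
    Nat.card {u // (border A u).rank = r + 2} + (if A.rank = r then q ^ r else 0) =
      (if A.rank = r + 2 then q ^ (r + 2) else 0) + (if A.rank = r then q ^ n else 0) := by
  have hcompl := card_add_card_not fun u => u ∈ LinearMap.range A.mulVecLin
  rw [card_mem_range_mulVec, Nat.card_fun, Nat.card_fin] at hcompl
  have hrank (u : Fin n → K) : (border A u).rank = r + 2 ↔
      A.rank = r + 2 ∧ u ∈ LinearMap.range A.mulVecLin ∨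
        A.rank = r ∧ u ∉ LinearMap.range A.mulVecLin := by
    rw [hA.rank_border]
    grind
  simp only [hrank]
  by_cases h2 : A.rank = r + 2
  · simp only [h2, true_and, Nat.add_eq_left, OfNat.ofNat_ne_zero, false_and, or_false, if_true,
      if_false, card_mem_range_mulVec]
  by_cases h0 : A.rank = r
  · rw [h0] at hcompl
    simp only [h0, true_and, if_true]
    lia
  · simp only [h2, h0, false_and, or_false, if_false, Nat.card_of_isEmpty]

theorem na_succ_succ (r n : ℕ) :
    na K (r + 2) (n + 1) + na K r n * q ^ r = na K (r + 2) n * q ^ (r + 2) + na K r n * q ^ n := by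
  simp only [na_eq_skewCount, skewCount_mul]
  rw [skewCount_succ, ← Finset.sum_add_distrib, ← Finset.sum_add_distrib]
  exact Finset.sum_congr rfl fun A _ => A.2.card_rank_border_eq r

theorem na_mul_card_pow (r n : ℕ) :
    na K r (n + 1) * q ^ (n + 1) =
      q ^ r * (na K r (n + 1) + (q ^ (n + 1) - 1) * na K r n) := by
  classical
  have := Fintype.ofFinite K
  calc na K r (n + 1) * q ^ (n + 1)
      = ∑ A : SkewMatrix K (n + 1), q ^ r * Nat.card {b // A.1.rank = r ∧ A.1 *ᵥ b = 0} := by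
        rw [na_eq_skewCount, skewCount_mul]
        refine Finset.sum_congr rfl fun A _ => ?_
        split_ifs with h
        · simp only [h, true_and, ← card_pow_rank_mul_card_mulVec_eq_zero A.1]
        · simp [h]
    _ = q ^ r * ∑ b : Fin (n + 1) → K, skewCount fun A => A.rank = r ∧ A *ᵥ b = 0 := by
        rw [sum_skewCount, Finset.mul_sum]
    _ = q ^ r * (na K r (n + 1) + (q ^ (n + 1) - 1) * na K r n) := by
        rw [← Finset.add_sum_erase _ _ (Finset.mem_univ 0), Finset.sum_congr rfl fun b hb =>
          skewCount_rank_eq_and_mulVec_eq_zero r (Finset.ne_of_mem_erase hb)]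
        simp [na_eq_skewCount, Finset.card_erase_of_mem]

theorem card_mul_skewCount_mulVec_ne_zero (r : ℕ) {b : Fin (n + 1) → K} (hb : b ≠ 0) :
    q * skewCount (fun A => A.rank = r + 2 ∧ A *ᵥ b ≠ 0) =
      (q ^ (n - r) - 1) * q ^ n * na K r n := by
  have hsplit := skewCount_and_add_and_not (fun A => A.rank = r + 2) (fun A => A *ᵥ b = 0)
  rw [skewCount_rank_eq_and_mulVec_eq_zero _ hb, ← na_eq_skewCount] at hsplit
  have hrec := na_succ_succ (K := K) r n
  have hdouble := na_mul_card_pow (K := K) (r + 2) n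
  generalize skewCount (fun A => A.rank = r + 2 ∧ A *ᵥ b ≠ 0) = z at *
  rcases le_or_gt r n with hrn | hrn
  · have hq : 0 < q := Nat.card_pos
    obtain ⟨k, rfl⟩ := Nat.exists_eq_add_of_le hrn
    rw [Nat.add_sub_cancel_left]
    apply Nat.eq_of_mul_eq_mul_left (pow_pos hq (r + 1))
    zify [Nat.one_le_pow _ q hq] at hsplit hrec hdouble ⊢
    linear_combination (q : ℤ) ^ (r + 2) * hsplit + (q : ℤ) ^ (r + k + 1) * hrec - hdouble
  · have hlarge : na K (r + 2) (n + 1) = 0 := na_eq_zero (by lia)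
    have hz : z = 0 := by lia
    rw [na_eq_zero hrn, hz, mul_zero, mul_zero]

end Counting

section Weight

variable {K : Type} [Field K] {n : ℕ}

local notation "q" => Nat.card K

/-- The coefficients of a functional `φ` along the first column of a bordered matrix. -/
def borderCoeff (φ : Matrix (Fin (n + 1)) (Fin (n + 1)) K →ₗ[K] K) (i : Fin n) : K :=
  φ (border 0 (Pi.single i 1))

theorem apply_border_zero (φ : Matrix (Fin (n + 1)) (Fin (n + 1)) K →ₗ[K] K) (u : Fin n → K) :
    φ (border 0 u) = borderCoeff φ ⬝ᵥ u := by
  have hsum : border 0 u = ∑ i, u i • border 0 (Pi.single i (1 : K)) := by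
    ext i j
    cases i using Fin.cases <;> cases j using Fin.cases <;>
      simp [border, Matrix.sum_apply, Pi.single_apply]
  rw [hsum, map_sum, dotProduct_comm]
  simp [dotProduct, borderCoeff]

theorem apply_border (φ : Matrix (Fin (n + 1)) (Fin (n + 1)) K →ₗ[K] K)
    (A : Matrix (Fin n) (Fin n) K) (u : Fin n → K) :
    φ (border A u) = φ (border A 0) + borderCoeff φ ⬝ᵥ u := by
  rw [border_eq_add, map_add, apply_border_zero]

theorem IsSkewSym.rank_border_le_iff {A : Matrix (Fin n) (Fin n) K} (hA : IsSkewSym A) (s : ℕ)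
    (u : Fin n → K) : (border A u).rank ≤ 2 * (s + 1) ↔
      A.rank ≤ 2 * s ∨ A.rank = 2 * s + 2 ∧ u ∈ LinearMap.range A.mulVecLin := by
  obtain ⟨k, hk⟩ := hA.even_rank
  rw [hA.rank_border]
  grind

theorem IsSkewSym.range_le_ker_iff {A : Matrix (Fin n) (Fin n) K} (hA : IsSkewSym A)
    (b : Fin n → K) : LinearMap.range A.mulVecLin ≤ LinearMap.ker (dotProductEquiv K (Fin n) b) ↔
      A *ᵥ b = 0 := by
  have h (x : Fin n → K) : b ⬝ᵥ A *ᵥ x = 0 ↔ x ⬝ᵥ A *ᵥ b = 0 := by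
    rw [hA.dotProduct_mulVec_comm, neg_eq_zero]
  rw [LinearMap.range_le_iff_comap, Submodule.eq_top_iff']
  simp only [Submodule.mem_comap, LinearMap.mem_ker, mulVecLin_apply,
    dotProductEquiv_apply_apply, h]
  exact ⟨fun hb => dotProduct_eq_zero _ fun x => by rw [dotProduct_comm, hb],
    fun hb x => by rw [hb, dotProduct_zero]⟩

/-- The number of skew-symmetric matrices of rank at most `2 * t` at which `φ` does not vanish,
that is, the weight of `φ` with every projective point counted `q - 1` times. -/
noncomputable def weight (t : ℕ) (φ : Matrix (Fin n) (Fin n) K →ₗ[K] K) : ℕ :=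
  skewCount fun A => A.rank ≤ 2 * t ∧ φ A ≠ 0

variable (K) in
/-- The minimum distance of the code of skew-symmetric matrices of size `p + 2` and rank at most
`2 * (s + 1)`. The truncation of `p - 2 * s` is harmless, since `na K (2 * s) p = 0` when
`p < 2 * s`. -/
noncomputable def minDist (s p : ℕ) : ℕ :=
  (q ^ (p - 2 * s) - 1) * q ^ (p + 2 * s) * na K (2 * s) p + q ^ p * Na K (2 * s) (p + 1)

open Classical in
theorem card_mem_affine_ne_zero_of_le_ker {V : Type*} [AddCommGroup V] [Module K V]
    {W : Submodule K V} {f : V →ₗ[K] K} (hW : W ≤ LinearMap.ker f) (c : K) :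
    Nat.card {v // v ∈ W ∧ c + f v ≠ 0} = if c ≠ 0 then Nat.card W else 0 := by
  have h (v : V) : v ∈ W ∧ c + f v ≠ 0 ↔ v ∈ W ∧ c ≠ 0 :=
    and_congr_right fun hv => by rw [LinearMap.mem_ker.1 (hW hv), add_zero]
  split_ifs with hc
  · exact Nat.card_congr (Equiv.subtypeEquivRight fun v => by rw [h, and_iff_left hc])
  · have : IsEmpty {v // v ∈ W ∧ c + f v ≠ 0} := ⟨fun v => hc ((h v).1 v.2).2⟩
    exact Nat.card_of_isEmpty

theorem card_mul_card_affine_ne_zero {V : Type*} [AddCommGroup V] [Module K V] [Finite V]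
    {f : V →ₗ[K] K} (hf : f ≠ 0) (c : K) :
    q * Nat.card {v // c + f v ≠ 0} = (q - 1) * Nat.card V := by
  obtain ⟨w, hw⟩ := LinearMap.surjective hf 1
  have e : K × {v // c + f v = 0} ≃ V :=
    { toFun x := x.2.1 + x.1 • w
      invFun v := (c + f v, ⟨v - (c + f v) • w, by simp [hw]⟩)
      left_inv := by
        rintro ⟨a, v, hv⟩
        have h : c + (f v + a) = a := by rw [← add_assoc, hv, zero_add]
        simp [hw, h]
      right_inv v := by simp }
  have hzero : q * Nat.card {v // c + f v = 0} = Nat.card V := by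
    rw [← Nat.card_prod, Nat.card_congr e]
  have htotal := congrArg (q * ·) (card_add_card_not fun v => c + f v = 0)
  simp only [mul_add, hzero] at htotal
  rw [Nat.sub_one_mul, ← htotal, Nat.add_sub_cancel_left]

theorem card_mul_card_mem_affine_ne_zero {V : Type*} [AddCommGroup V] [Module K V] [Finite V]
    (W : Submodule K V) {f : V →ₗ[K] K} (hf : ¬W ≤ LinearMap.ker f) (c : K) :
    q * Nat.card {v // v ∈ W ∧ c + f v ≠ 0} = (q - 1) * Nat.card W := by
  have hW : f.domRestrict W ≠ 0 := fun h => hf fun w hw => LinearMap.congr_fun h ⟨w, hw⟩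
  rw [← card_mul_card_affine_ne_zero hW c]
  congr 1
  exact Nat.card_congr (Equiv.subtypeSubtypeEquivSubtypeInter _ fun v => c + f v ≠ 0).symm

variable [Finite K]

open Classical in
theorem IsSkewSym.card_mul_card_border_apply_ne_zero {A : Matrix (Fin n) (Fin n) K}
    (hA : IsSkewSym A) (s : ℕ) {φ : Matrix (Fin (n + 1)) (Fin (n + 1)) K →ₗ[K] K}
    (hφ : borderCoeff φ ≠ 0) :
    q * Nat.card {u // (border A u).rank ≤ 2 * (s + 1) ∧ φ (border A u) ≠ 0} =
      (if A.rank ≤ 2 * s then (q - 1) * q ^ n else 0) +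
      (if A.rank = 2 * s + 2 ∧ A *ᵥ borderCoeff φ ≠ 0 then (q - 1) * q ^ (2 * s + 2) else 0) +
      (if A.rank = 2 * s + 2 ∧ A *ᵥ borderCoeff φ = 0 ∧ φ (border A 0) ≠ 0 then
        q * q ^ (2 * s + 2) else 0) := by
  set f := dotProductEquiv K (Fin n) (borderCoeff φ) with hf
  have hfibre (u : Fin n → K) :
      ((border A u).rank ≤ 2 * (s + 1) ∧ φ (border A u) ≠ 0) ↔
      (A.rank ≤ 2 * s ∨ A.rank = 2 * s + 2 ∧ u ∈ LinearMap.range A.mulVecLin) ∧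
        φ (border A 0) + f u ≠ 0 := by
    rw [hA.rank_border_le_iff, apply_border φ A u, hf, dotProductEquiv_apply_apply]
  simp only [hfibre]
  by_cases hsmall : A.rank ≤ 2 * s
  · have hne : A.rank ≠ 2 * s + 2 := by lia
    have hf0 : f ≠ 0 := (LinearEquiv.map_ne_zero_iff _).2 hφ
    simp only [hsmall, hne, true_or, true_and, false_and, if_true, if_false, add_zero]
    rw [card_mul_card_affine_ne_zero hf0, Nat.card_fun, Nat.card_fin]
  by_cases hrank : A.rank = 2 * s + 2
  · have hcard : Nat.card (LinearMap.range A.mulVecLin) = q ^ (2 * s + 2) :=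
      hrank ▸ card_mem_range_mulVec A
    rw [hrank] at hsmall
    by_cases hb : A *ᵥ borderCoeff φ = 0
    · have hker := card_mem_affine_ne_zero_of_le_ker ((hA.range_le_ker_iff _).2 hb) (φ (border A 0))
      simp only [hrank, hsmall, hb, ne_eq, not_true, true_and, false_or, and_false, if_false,
        zero_add, ← hcard]
      exact (congrArg (q * ·) hker).trans (by simp only [mul_ite, mul_zero])
    · simp only [hrank, hsmall, hb, ne_eq, not_false_eq_true, true_and, false_or, false_and,
        if_false, if_true, zero_add, add_zero, ← hcard]
      exact card_mul_card_mem_affine_ne_zero _ (mt (hA.range_le_ker_iff _).1 hb) _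
  · simp [hsmall, hrank]

theorem card_mul_weight_succ (s : ℕ) {φ : Matrix (Fin (n + 1)) (Fin (n + 1)) K →ₗ[K] K}
    (hφ : borderCoeff φ ≠ 0) : q * weight (s + 1) φ =
      Na K (2 * s) n * ((q - 1) * q ^ n) +
      skewCount (fun A => A.rank = 2 * s + 2 ∧ A *ᵥ borderCoeff φ ≠ 0) *
        ((q - 1) * q ^ (2 * s + 2)) +
      skewCount (fun A => A.rank = 2 * s + 2 ∧ A *ᵥ borderCoeff φ = 0 ∧ φ (border A 0) ≠ 0) *
        (q * q ^ (2 * s + 2)) := by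
  classical
  simp only [weight, skewCount_succ, Na_eq_skewCount, skewCount_mul, Finset.mul_sum,
    ← Finset.sum_add_distrib]
  refine Finset.sum_congr rfl fun A _ => ?_
  convert A.2.card_mul_card_border_apply_ne_zero s hφ

theorem weight_succ (s : ℕ) {p : ℕ} {φ : Matrix (Fin (p + 2)) (Fin (p + 2)) K →ₗ[K] K}
    (hφ : borderCoeff φ ≠ 0) : weight (s + 1) φ = (q - 1) * minDist K s p +
      skewCount (fun A => A.rank = 2 * s + 2 ∧ A *ᵥ borderCoeff φ = 0 ∧ φ (border A 0) ≠ 0) *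
        q ^ (2 * s + 2) := by
  have hq : 0 < q := Nat.card_pos
  refine Nat.eq_of_mul_eq_mul_left hq ?_
  rw [card_mul_weight_succ s hφ, minDist]
  linear_combination (q - 1) * q ^ (2 * s + 1) * card_mul_skewCount_mulVec_ne_zero (2 * s) hφ

end Weight

section MinimumDistance

open Projectivization

theorem card_projectivization_mul_card_units {K V : Type*} [DivisionRing K] [AddCommGroup V]
    [Module K V] {P : V → Prop} (h0 : ¬P 0) (hsmul : ∀ (c : Kˣ) v, P (c • v) ↔ P v) :
    Nat.card {x : Projectivization K V // ∃ v, ∃ h : v ≠ 0, x = .mk K v h ∧ P v} * Nat.card Kˣ =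
      Nat.card {v // P v} := by
  have hP (v : {v : V // v ≠ 0}) : P v ↔
      ∃ w, ∃ h : w ≠ 0, (nonZeroEquivProjectivizationProdUnits K V v).1 = .mk K w h ∧ P w := by
    refine ⟨fun hv => ⟨v, v.2, rfl, hv⟩, fun ⟨w, hw, h, hPw⟩ => ?_⟩
    obtain ⟨c, hc⟩ := (mk_eq_mk_iff K v.1 w v.2 hw).1 h
    rwa [← hc, hsmul]
  have hne {v : V} (hv : P v) : v ≠ 0 := fun h => h0 (h ▸ hv)
  rw [← Nat.card_prod]
  exact Nat.card_congr <| Equiv.prodSubtypeFstEquivSubtypeProd.symm.trans <|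
    ((nonZeroEquivProjectivizationProdUnits K V).subtypeEquiv hP).symm.trans <|
    Equiv.subtypeSubtypeEquivSubtype hne

variable {K : Type} [Field K] {n : ℕ}

local notation "q" => Nat.card K

theorem projWt_mul (t : ℕ) (φ : Matrix (Fin n) (Fin n) K →ₗ[K] K) :
    projWt K n t φ * (q - 1) = weight t φ := by
  have hsmul (c : Kˣ) (A : Matrix (Fin n) (Fin n) K)
      (hA : IsSkewSym A ∧ A.rank ≤ 2 * t ∧ φ A ≠ 0) :
      IsSkewSym (c • A) ∧ (c • A).rank ≤ 2 * t ∧ φ (c • A) ≠ 0 := by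
    have hc := mem_nonZeroDivisors_of_ne_zero c.ne_zero
    rw [Units.smul_def, rank_smul_of_mem_nonZeroDivisors _ hc, map_smul]
    exact ⟨hA.1.smul c, hA.2.1, smul_ne_zero c.ne_zero hA.2.2⟩
  rw [← Nat.card_units]
  refine card_projectivization_mul_card_units (fun h => h.2.2 (map_zero φ)) fun c A =>
    ⟨fun h => ?_, hsmul c A⟩
  simpa only [inv_smul_smul] using hsmul c⁻¹ _ h

theorem weight_comp_congruence (t : ℕ) (φ : Matrix (Fin n) (Fin n) K →ₗ[K] K)
    (P : GL (Fin n) K) : weight t (φ ∘ₗ (congruence P).toLinearMap) = weight t φ := by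
  rw [weight, weight, ← skewCount_comp_congruence P fun A => A.rank ≤ 2 * t ∧ φ A ≠ 0]
  simp only [rank_congruence]
  rfl

theorem IsSkewSym.exists_borderCoeff_comp_congruence_ne_zero
    {A : Matrix (Fin (n + 1)) (Fin (n + 1)) K} (hA : IsSkewSym A)
    {φ : Matrix (Fin (n + 1)) (Fin (n + 1)) K →ₗ[K] K} (hφ : φ A ≠ 0) :
    ∃ P, borderCoeff (φ ∘ₗ (congruence P).toLinearMap) ≠ 0 := by
  obtain ⟨i, j, hij⟩ := hA.exists_apply_wedge_single_ne_zero hφ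
  obtain ⟨Q, hQ⟩ := exists_GL_mulVec_eq vecCons_one_zero_ne_zero
    (Pi.single_ne_zero_iff.2 (one_ne_zero (α := K)))
  obtain ⟨P, hP⟩ := (isUnit_transpose Q.1).2 Q.isUnit
  have hPQ : P.1ᵀ = Q.1 := by rw [hP, transpose_transpose]
  have hwedge : congruence P (border 0 (vecTail (Q⁻¹.1 *ᵥ Pi.single i 1))) =
      wedge (Pi.single i 1) (Pi.single j 1) := by
    rw [← wedge_vecCons_one_zero, congruence_wedge, hPQ, hQ, mulVec_mulVec, Q.mul_inv, one_mulVec]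
  refine ⟨P, fun h => hij ?_⟩
  rw [← hwedge]
  have hzero := apply_border_zero (φ ∘ₗ (congruence P).toLinearMap)
    (vecTail (Q⁻¹.1 *ᵥ Pi.single i 1))
  rwa [h, zero_dotProduct] at hzero

variable [Finite K]

theorem minDist_le_projWt (s : ℕ) {p : ℕ} {A : Matrix (Fin (p + 2)) (Fin (p + 2)) K}
    (hA : IsSkewSym A) {φ : Matrix (Fin (p + 2)) (Fin (p + 2)) K →ₗ[K] K} (hφ : φ A ≠ 0) :
    minDist K s p ≤ projWt K (p + 2) (s + 1) φ := by
  obtain ⟨P, hP⟩ := hA.exists_borderCoeff_comp_congruence_ne_zero hφ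
  have hq : 0 < q - 1 := Nat.sub_pos_of_lt Finite.one_lt_card
  refine Nat.le_of_mul_le_mul_left (Nat.le.intro (weight_succ s hP).symm |>.trans_eq ?_) hq
  rw [weight_comp_congruence, ← projWt_mul, mul_comm]

theorem projWt_entryLinearMap (s p : ℕ) :
    projWt K (p + 2) (s + 1) (entryLinearMap K K 1 0) = minDist K s p := by
  have hb : borderCoeff (entryLinearMap K K 1 (0 : Fin (p + 2))) ≠ 0 := fun h =>
    one_ne_zero (α := K) (congrFun h 0)
  have hzero (A : Matrix (Fin (p + 1)) (Fin (p + 1)) K) :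
      entryLinearMap K K 1 (0 : Fin (p + 2)) (border A 0) = 0 := rfl
  have hq : 0 < q - 1 := Nat.sub_pos_of_lt Finite.one_lt_card
  have hexcess : skewCount (fun A => A.rank = 2 * s + 2 ∧
      A *ᵥ borderCoeff (entryLinearMap K K 1 (0 : Fin (p + 2))) = 0 ∧
      entryLinearMap K K 1 (0 : Fin (p + 2)) (border A 0) ≠ 0) = 0 := by
    simp [skewCount, hzero]
  refine Nat.eq_of_mul_eq_mul_left hq ?_
  rw [mul_comm, projWt_mul, weight_succ s hb, hexcess, zero_mul, add_zero]

theorem exists_rank_le_two_entryLinearMap_ne_zero (K : Type) [Field K] (p : ℕ) :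
    ∃ A : Matrix (Fin (p + 2)) (Fin (p + 2)) K, IsSkewSym A ∧ A.rank ≤ 2 ∧
      entryLinearMap K K 1 0 A ≠ 0 := by
  have h0 : IsSkewSym (0 : Matrix (Fin (p + 1)) (Fin (p + 1)) K) := .zero
  refine ⟨border 0 (Pi.single 0 1), isSkewSym_border h0 _, ?_, one_ne_zero⟩
  rw [h0.rank_border]
  split_ifs <;> simp

end MinimumDistance

theorem stmt17_general (K : Type) [Field K] [Fintype K] (m t : ℕ) (ht : 0 < t) (hm : 2 ≤ m) :
    IsLeast {w : ℕ | ∃ φ : Matrix (Fin m) (Fin m) K →ₗ[K] K,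
        (∃ A : Matrix (Fin m) (Fin m) K, IsSkewSym A ∧ A.rank ≤ 2*t ∧ φ A ≠ 0) ∧
        w = projWt K m t φ}
      ((Fintype.card K ^ (m - 2*t) - 1) * Fintype.card K ^ (m + 2*t - 4)
          * na K (2*t-2) (m-2)
        + Fintype.card K ^ (m-2) * Na K (2*t-2) (m-1)) := by
  obtain ⟨s, rfl⟩ := Nat.exists_eq_add_of_le' ht
  obtain ⟨p, rfl⟩ := Nat.exists_eq_add_of_le' hm
  have hsub : p + 2 - 2 * (s + 1) = p - 2 * s := by lia
  have hadd : p + 2 + 2 * (s + 1) - 4 = p + 2 * s := by lia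
  rw [hsub, hadd, ← Nat.card_eq_fintype_card]
  refine ⟨?_, ?_⟩
  · obtain ⟨A, hA, hrank, hφ⟩ := exists_rank_le_two_entryLinearMap_ne_zero K p
    exact ⟨_, ⟨A, hA, by lia, hφ⟩, (projWt_entryLinearMap s p).symm⟩
  · rintro _ ⟨φ, ⟨A, hA, -, hφ⟩, rfl⟩
    exact minDist_le_projWt s hA hφ

theorem stmt17 (K : Type) [Field K] [Fintype K] (hchar : ringChar K ≠ 2)
    (m t : ℕ) (ht : 0 < t) (htm : 2*t ≤ m) :
    IsLeast {w : ℕ | ∃ φ : Matrix (Fin m) (Fin m) K →ₗ[K] K,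
        (∃ A : Matrix (Fin m) (Fin m) K, IsSkewSym A ∧ A.rank ≤ 2*t ∧ φ A ≠ 0) ∧
        w = projWt K m t φ}
      ((Fintype.card K ^ (m - 2*t) - 1) * Fintype.card K ^ (m + 2*t - 4)
          * na K (2*t-2) (m-2)
        + Fintype.card K ^ (m-2) * Na K (2*t-2) (m-1)) :=
  stmt17_general K m t ht (by lia)
end
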